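/- The selfishness level of the Traveler's Dilemma game, the two-player game with strategy sets S_1 = S_2 = {2, 3, ..., 100} and payoffs p_i(s) := s_i if s_i = s_{-i}, p_i(s) := s_i + 2 if s_i < s_{-i}, and p_i(s) := s_{-i} − 2 otherwise, equals 1/2. -/

import Mathlib

open Finset
open scoped ENNReal

/-- A strategic game with `n` players: each player `i` has a nonempty strategy
set `S i` and a real-valued payoff function `p i` on joint strategies. -/
structure Game (n : ℕ) where
  S : Fin n → Type
  ne : ∀ i, Nonempty (S i)
  p : Fin n → ((j : Fin n) → S j) → ℝ

namespace Game

variable {n : ℕ}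

/-- The social welfare of a joint strategy. -/
def SW (G : Game n) (s : (j : Fin n) → G.S j) : ℝ := ∑ i, G.p i s

/-- A joint strategy is a social optimum if it maximizes the social welfare. -/
def SocialOptimum (G : Game n) (s : (j : Fin n) → G.S j) : Prop :=
  ∀ t, G.SW t ≤ G.SW s

/-- A joint strategy is a (pure) Nash equilibrium if no unilateral deviation is profitable. -/
def NashEq (G : Game n) (s : (j : Fin n) → G.S j) : Prop :=
  ∀ (i : Fin n) (s' : G.S i), G.p i (Function.update s i s') ≤ G.p i s

/-- The altruistic version `G(α)` of a game `G`. -/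
def alt (G : Game n) (α : ℝ) : Game n where
  S := G.S
  ne := G.ne
  p := fun i s => G.p i s + α * G.SW s

/-- `G` is `α`-selfish if some pure Nash equilibrium of `G(α)` is a social optimum of `G`. -/
def Selfish (G : Game n) (α : ℝ) : Prop :=
  ∃ s, (G.alt α).NashEq s ∧ G.SocialOptimum s

/-- The selfishness level of `G`: the infimum of the nonnegative `α` for which `G`
is `α`-selfish (`⊤` if there is no such `α`). -/
noncomputable def selfishnessLevel (G : Game n) : ℝ≥0∞ :=
  sInf {x : ℝ≥0∞ | ∃ α : ℝ, 0 ≤ α ∧ G.Selfish α ∧ x = ENNReal.ofReal α}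

/-- A social optimum is stable if no player profits from a unilateral deviation
to another social optimum. -/
def StableOptimum (G : Game n) (s : (j : Fin n) → G.S j) : Prop :=
  G.SocialOptimum s ∧ ∀ (i : Fin n) (s' : G.S i),
    G.SocialOptimum (Function.update s i s') →
      G.p i (Function.update s i s') ≤ G.p i s

/-- The appeal factor of a unilateral deviation `s'` of player `i` from `s`. -/
noncomputable def AF (G : Game n) (s : (j : Fin n) → G.S j) (i : Fin n) (s' : G.S i) : ℝ :=
  (G.p i (Function.update s i s') - G.p i s) /
    (G.SW s - G.SW (Function.update s i s'))

end Game


/-- The Traveler's Dilemma game: two players with strategies `{2, ..., 100}`; a player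
matching the other's choice gets that amount, undercutting earns a bonus of `2`, and
overbidding incurs a penalty of `2`. -/
def travelersDilemma : Game 2 where
  S := fun _ => {k : ℕ // 2 ≤ k ∧ k ≤ 100}
  ne := fun _ => ⟨⟨2, le_refl 2, by norm_num⟩⟩
  p := fun i s =>
    if (s i).1 = (s (i + 1)).1 then ((s i).1 : ℝ)
    else if (s i).1 < (s (i + 1)).1 then ((s i).1 : ℝ) + 2
    else ((s (i + 1)).1 : ℝ) - 2

theorem td_SW (s : (j : Fin 2) → travelersDilemma.S j) :
    travelersDilemma.SW s = 2 * ((min (s 0).1 (s 1).1 : ℕ) : ℝ) := by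
  simp only [Game.SW, Fin.sum_univ_two, travelersDilemma]
  have h1 : (0 + 1 : Fin 2) = 1 := rfl
  have h2 : (1 + 1 : Fin 2) = 0 := rfl
  rw [h1, h2]
  rcases lt_trichotomy (s 0).1 (s 1).1 with h | h | h
  · rw [if_neg h.ne, if_pos h, if_neg h.ne', if_neg (not_lt.2 h.le), min_eq_left h.le]; ring
  · rw [if_pos h, if_pos h.symm, min_eq_left h.le, ← h]; ring
  · rw [if_neg h.ne', if_neg (not_lt.2 h.le), if_neg h.ne, if_pos h, min_eq_right h.le]; ring

/-- The joint strategy (100, 100). -/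
def tdTop : (j : Fin 2) → travelersDilemma.S j :=
  fun _ => (⟨100, by norm_num, le_refl 100⟩ : {k : ℕ // 2 ≤ k ∧ k ≤ 100})

theorem td_SW_top : travelersDilemma.SW tdTop = 200 := by
  rw [td_SW]
  simp only [tdTop, min_self]; norm_num

theorem td_p_top (i : Fin 2) : travelersDilemma.p i tdTop = 100 := by
  simp [travelersDilemma, tdTop]

theorem td_opt_top : travelersDilemma.SocialOptimum tdTop := by
  intro t
  rw [td_SW_top, td_SW]
  have h : min (t 0).1 (t 1).1 ≤ 100 := (min_le_left _ _).trans (t 0).2.2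
  have h' : ((min (t 0).1 (t 1).1 : ℕ) : ℝ) ≤ 100 := by exact_mod_cast h
  linarith

theorem td_opt_unique (s : (j : Fin 2) → travelersDilemma.S j)
    (h : travelersDilemma.SocialOptimum s) : s = tdTop := by
  have h1 := h tdTop
  rw [td_SW_top, td_SW] at h1
  have h2 : (100 : ℝ) ≤ ((min (s 0).1 (s 1).1 : ℕ) : ℝ) := by linarith
  have h3 : 100 ≤ min (s 0).1 (s 1).1 := by exact_mod_cast h2
  have a0 := (s 0).2.2
  have a1 := (s 1).2.2
  have b0 := h3.trans (min_le_left _ _)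
  have b1 := h3.trans (min_le_right _ _)
  funext j
  apply Subtype.ext
  fin_cases j
  · exact le_antisymm a0 b0
  · exact le_antisymm a1 b1

theorem td_SW_dev (i : Fin 2) (k : {k : ℕ // 2 ≤ k ∧ k ≤ 100}) :
    travelersDilemma.SW (Function.update tdTop i k) = 2 * (k.1 : ℝ) := by
  rw [td_SW]
  have hk := k.2.2
  fin_cases i
  · have : min k.1 100 = k.1 := min_eq_left hk
    simpa [tdTop, Function.update] using hk
  · have : min 100 k.1 = k.1 := min_eq_right hk
    simpa [tdTop, Function.update] using hk

theorem td_p_dev (i : Fin 2) (k : {k : ℕ // 2 ≤ k ∧ k ≤ 100}) :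
    travelersDilemma.p i (Function.update tdTop i k) =
      if k.1 = 100 then (k.1 : ℝ) else (k.1 : ℝ) + 2 := by
  have hk := k.2.2
  have key : travelersDilemma.p i (Function.update tdTop i k) =
      if k.1 = 100 then (k.1 : ℝ) else if k.1 < 100 then (k.1 : ℝ) + 2 else ((100 : ℕ) : ℝ) - 2 := by
    fin_cases i <;> rfl
  rw [key]
  split_ifs with h1 h2
  · rfl
  · rfl
  · omega

theorem td_selfish_iff (α : ℝ) : travelersDilemma.Selfish α ↔ 1 / 2 ≤ α := by
  constructor
  · rintro ⟨s, hN, hO⟩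
    obtain rfl := td_opt_unique s hO
    have h := hN 0 (⟨99, by norm_num, by norm_num⟩ : {k : ℕ // 2 ≤ k ∧ k ≤ 100})
    change travelersDilemma.p _ _ + α * travelersDilemma.SW _ ≤
      travelersDilemma.p _ _ + α * travelersDilemma.SW _ at h
    erw [td_p_top, td_SW_top, td_p_dev, td_SW_dev] at h
    norm_num at h
    linarith
  · intro hα
    refine ⟨tdTop, ?_, td_opt_top⟩
    intro i k
    change travelersDilemma.p i (Function.update tdTop i k) +
      α * travelersDilemma.SW (Function.update tdTop i k) ≤
      travelersDilemma.p i tdTop + α * travelersDilemma.SW tdTop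
    rw [td_p_top, td_SW_top]
    erw [td_p_dev, td_SW_dev]
    have hk : k.1 ≤ 100 := k.2.2
    split_ifs with h
    · erw [h]; norm_num
    · have h99 : k.1 ≤ 99 := by omega
      have h' : (k.1 : ℝ) ≤ 99 := by exact_mod_cast h99
      nlinarith

/-- the selfishness level of the Traveler's Dilemma game equals `1/2`. -/
theorem selfishnessLevel_travelersDilemma :
    travelersDilemma.selfishnessLevel = ENNReal.ofReal (1 / 2) := by
  unfold Game.selfishnessLevel
  apply le_antisymm
  · exact sInf_le ⟨1 / 2, by norm_num, (td_selfish_iff _).2 le_rfl, rfl⟩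
  · apply le_sInf
    rintro x ⟨α, -, hs, rfl⟩
    exact ENNReal.ofReal_le_ofReal ((td_selfish_iff α).1 hs)
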